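/- arXiv:math/0010292 — 2 statements merged into one kernel-verified Lean document; each statement's English description precedes it below -/
import Mathlib

section
/- Let X and Y be realcompact completely regular Hausdorff topological spaces, let E and F be nonzero normed spaces over 𝕂 with E finite-dimensional, and let T : C_b(X,E) → C_b(Y,F) be a 𝕂-linear biseparating map. If C_b(X,E) and C_b(Y,F) are endowed with the supremum norm, then both T and T⁻¹ are continuous. -/
open Filter Topology BoundedContinuousFunction

/-- A topological space is realcompact if it admits a closed topological embedding
into a product `ℝ^ι` of copies of `ℝ`. -/
def Realcompact (X : Type) [TopologicalSpace X] : Prop :=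
  ∃ (ι : Type) (e : X → ι → ℝ), IsClosedEmbedding e

/-- A map between spaces of bounded continuous vector-valued functions is separating if it
maps pairs of functions with disjoint cozero sets to pairs of functions with disjoint
cozero sets. -/
def SeparatingB {X Y E F : Type} [TopologicalSpace X] [TopologicalSpace Y]
    [NormedAddCommGroup E] [NormedAddCommGroup F] (T : (X →ᵇ E) → (Y →ᵇ F)) : Prop :=
  ∀ f g : X →ᵇ E, (∀ x, ‖f x‖ * ‖g x‖ = 0) → ∀ y, ‖T f y‖ * ‖T g y‖ = 0

/-!
Fix `y : Y`. The scalar functions `φ` such that `T (φ • f) y = 0` for all `f` form a proper ideal,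
so they all tend to `0` along a common ultrafilter `l`, a point of the Stone–Čech compactification
of `X` carrying the functional `f ↦ T f y`. The crux is that `T f y = 0` whenever `f` tends to `0`
along `l`. Otherwise `T f` is bounded away from `0` near `y`, even though `T f y` only depends on
`f` where `f` is small. Multiplying `f` by a staircase function of `1 / √‖f‖` gives a *bounded*
function `g` which coincides with `n • f` near points where `f` is small, for arbitrarily large `n`.
Since `T` is biseparating, `T g` then takes the value `n • T f y'` at some `y'` where `‖T f y'‖`
exceeds a fixed positive constant, contradicting the boundedness of `T g`.

As `E` is finite-dimensional, `f` has a limit `e` along `l`, so `T f y = T (const X e) y`. Hence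
evaluations at points are continuous after `T`, `F` is finite-dimensional, and the closed graph
and open mapping theorems conclude.
-/

section Stairs

/-- A continuous staircase function: at distance at most `1` from the identity, and equal to `n`
on `[n, n + 2/3]` for every integer `n`. -/
noncomputable def stair (s : ℝ) : ℝ :=
  s + max (-Int.fract s) (2 * Int.fract s - 2)

lemma continuous_stair : Continuous stair := by
  have h : ContinuousOn (fun t : ℝ => max (-t) (2 * t - 2)) (Set.Icc 0 1) := by fun_prop
  exact continuous_id.add (h.comp_fract'' (by norm_num))

lemma abs_stair_le (s : ℝ) : |stair s| ≤ |s| + 1 := by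
  have h_nonneg := Int.fract_nonneg s
  have h_lt := Int.fract_lt_one s
  refine (abs_add_le _ _).trans (add_le_add_right (abs_le.2 ⟨?_, max_le ?_ ?_⟩) _)
  · exact le_max_of_le_left (by linarith)
  all_goals linarith

lemma stair_eq_intCast {s : ℝ} {n : ℤ} (hs : s ∈ Set.Ioo (n : ℝ) (n + 2 / 3)) : stair s = n := by
  have h_floor : ⌊s⌋ = n := Int.floor_eq_iff.2 ⟨hs.1.le, by linarith [hs.2]⟩
  have h_fract : Int.fract s = s - n := by rw [Int.fract, h_floor]
  rw [stair, h_fract, max_eq_left (by linarith [hs.2])]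
  ring

lemma exists_mem_Ioo_or_add_half_mem_Ioo (s : ℝ) :
    ∃ n : ℤ, s ∈ Set.Ioo (n : ℝ) (n + 2 / 3) ∨ s + 1 / 2 ∈ Set.Ioo (n : ℝ) (n + 2 / 3) := by
  have h_nonneg := Int.fract_nonneg s
  have h_lt := Int.fract_lt_one s
  have h_add := Int.floor_add_fract s
  by_cases h_small : Int.fract s < 1 / 6
  · exact ⟨⌊s⌋, Or.inr ⟨by linarith, by linarith⟩⟩
  by_cases h_mid : Int.fract s < 2 / 3
  · exact ⟨⌊s⌋, Or.inl ⟨by linarith, by linarith⟩⟩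
  · exact ⟨⌊s⌋ + 1, Or.inr ⟨by push_cast; linarith, by push_cast; linarith⟩⟩

variable (𝕂 : Type*) {X E : Type*} [RCLike 𝕂] [TopologicalSpace X] [NormedAddCommGroup E]
  [NormedSpace 𝕂 E]

/-- The radial map multiplying `v` by a staircase function of `1 / √‖v‖`, whose steps are shifted
by `c`. Near each `v ≠ 0`, one of the shifts `c = 0` and `c = 1 / 2` is an integer multiple of the
identity. The square root makes the map continuous at `0`. -/
noncomputable def radialStair (c : ℝ) (v : E) : E :=
  (stair ((√‖v‖)⁻¹ + c) : 𝕂) • v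

lemma norm_radialStair_le (c : ℝ) (v : E) :
    ‖radialStair 𝕂 c v‖ ≤ √‖v‖ + (|c| + 1) * ‖v‖ := by
  have h_arg : |(√‖v‖)⁻¹ + c| ≤ (√‖v‖)⁻¹ + |c| := by
    simpa only [abs_of_nonneg (inv_nonneg.2 (Real.sqrt_nonneg ‖v‖))]
      using abs_add_le (√‖v‖)⁻¹ c
  calc ‖radialStair 𝕂 c v‖ = |stair ((√‖v‖)⁻¹ + c)| * ‖v‖ := by
        rw [radialStair, norm_smul, RCLike.norm_ofReal]
    _ ≤ ((√‖v‖)⁻¹ + |c| + 1) * ‖v‖ := by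
        gcongr
        exact (abs_stair_le _).trans (by linarith)
    _ = √‖v‖ + (|c| + 1) * ‖v‖ := by
        rw [add_assoc, add_mul, inv_mul_eq_div, Real.div_sqrt]

lemma continuousAt_inv_sqrt_norm_add (c : ℝ) {v : E} (hv : v ≠ 0) :
    ContinuousAt (fun w : E => (√‖w‖)⁻¹ + c) v :=
  (continuous_norm.sqrt.continuousAt.inv₀
    (Real.sqrt_ne_zero'.2 (norm_pos_iff.2 hv))).add continuousAt_const

lemma continuous_radialStair (c : ℝ) : Continuous (radialStair 𝕂 c : E → E) := by
  refine continuous_iff_continuousAt.2 fun v => ?_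
  rcases eq_or_ne v 0 with rfl | hv
  · have h_bound : Continuous fun w : E => √‖w‖ + (|c| + 1) * ‖w‖ := by fun_prop
    have h_zero : radialStair 𝕂 c (0 : E) = 0 := smul_zero _
    rw [ContinuousAt, h_zero]
    exact squeeze_zero_norm (norm_radialStair_le 𝕂 c) (h_bound.tendsto' 0 0 (by simp))
  · exact (RCLike.continuous_ofReal.continuousAt.comp (continuous_stair.continuousAt.comp
      (continuousAt_inv_sqrt_norm_add c hv))).smul continuousAt_id

lemma radialStair_eventuallyEq {c : ℝ} {v : E} (hv : v ≠ 0) {n : ℤ}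
    (hn : (√‖v‖)⁻¹ + c ∈ Set.Ioo (n : ℝ) (n + 2 / 3)) :
    radialStair 𝕂 c =ᶠ[𝓝 v] fun w => (n : 𝕂) • w := by
  filter_upwards [(continuousAt_inv_sqrt_norm_add c hv).eventually_mem (Ioo_mem_nhds hn.1 hn.2)]
    with w hw
  rw [radialStair, stair_eq_intCast hw, RCLike.ofReal_intCast]

lemma eventually_radialStair_eventuallyEq (K : ℝ) :
    ∀ᶠ v : E in 𝓝[≠] 0, ∃ a : 𝕂, K ≤ ‖a‖ ∧
      (radialStair 𝕂 0 =ᶠ[𝓝 v] (fun w => a • w) ∨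
        radialStair 𝕂 (1 / 2) =ᶠ[𝓝 v] fun w => a • w) := by
  have h_sqrt : Tendsto (fun v : E => √‖v‖) (𝓝[≠] 0) (𝓝[>] 0) :=
    tendsto_nhdsWithin_iff.2
      ⟨((continuous_norm.sqrt).tendsto' 0 0 (by simp)).mono_left nhdsWithin_le_nhds,
        eventually_mem_nhdsWithin.mono fun v hv => Real.sqrt_pos.2 (norm_pos_iff.2 hv)⟩
  filter_upwards [h_sqrt.inv_tendsto_nhdsGT_zero.eventually_ge_atTop (K + 1),
    self_mem_nhdsWithin] with v h_large hv
  replace h_large : K + 1 ≤ (√‖v‖)⁻¹ := h_large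
  obtain ⟨n, hn⟩ := exists_mem_Ioo_or_add_half_mem_Ioo (√‖v‖)⁻¹
  refine ⟨n, ?_, hn.imp (fun h => radialStair_eventuallyEq 𝕂 hv (by rwa [add_zero]))
    (radialStair_eventuallyEq 𝕂 hv)⟩
  calc K ≤ n := by rcases hn with h | h <;> linarith [h.2]
    _ ≤ |(n : ℝ)| := le_abs_self _
    _ = ‖(n : 𝕂)‖ := by rw [← RCLike.norm_ofReal (K := 𝕂), RCLike.ofReal_intCast]

/-- The bounded continuous function `x ↦ radialStair 𝕂 c (f x)`. -/
noncomputable def radialStairComp (c : ℝ) (f : X →ᵇ E) : X →ᵇ E :=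
  ofNormedAddCommGroup (fun x => radialStair 𝕂 c (f x))
    ((continuous_radialStair 𝕂 c).comp f.continuous) (√‖f‖ + (|c| + 1) * ‖f‖) fun x =>
    (norm_radialStair_le 𝕂 c (f x)).trans (by gcongr <;> exact f.norm_coe_le_norm x)

variable {𝕂} in
lemma radialStairComp_eventuallyEq {c : ℝ} {f : X →ᵇ E} {v : E} {a : 𝕂}
    (h : radialStair 𝕂 c =ᶠ[𝓝 v] fun w => a • w) :
    radialStairComp 𝕂 c f =ᶠ[comap f (𝓝 v)] a • f :=
  h.comp_tendsto tendsto_comap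

end Stairs

section ScalarFunctions

variable (𝕂 : Type*) {X M : Type*} [RCLike 𝕂] [TopologicalSpace X] [TopologicalSpace M]

-- The sets of `comap f (𝓝 e)` act as neighbourhoods of the points of the Stone–Čech
-- compactification of `X` at which `f` takes the value `e`.
lemma exists_cutoff [T4Space M] {f : X → M} (hf : Continuous f) {e : M} {s : Set X}
    (hs : s ∈ comap f (𝓝 e)) :
    ∃ φ : X →ᵇ 𝕂, (∀ x ∉ s, φ x = 0) ∧ φ =ᶠ[comap f (𝓝 e)] 1 := by
  obtain ⟨W, hW, hWs⟩ := hs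
  obtain ⟨V, hV, hV_closed, hVW⟩ := exists_mem_nhds_isClosed_subset (interior_mem_nhds.2 hW)
  obtain ⟨p, hp_zero, hp_one, hp⟩ := exists_bounded_zero_one_of_closed
    isOpen_interior.isClosed_compl hV_closed (Set.disjoint_compl_left_iff_subset.2 hVW)
  refine ⟨ofNormedAddCommGroup (fun x => (p (f x) : 𝕂))
    (RCLike.continuous_ofReal.comp (p.continuous.comp hf)) 1 fun x => ?_, fun x hx => ?_, ?_⟩
  · rw [RCLike.norm_ofReal, abs_of_nonneg (hp _).1]
    exact (hp _).2
  · have hfx : p (f x) = 0 := hp_zero fun h => hx (hWs (interior_subset (s := W) h))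
    simp [hfx]
  · filter_upwards [preimage_mem_comap hV] with x hx
    have hfx : p (f x) = 1 := hp_one hx
    simp [hfx]

variable {𝕂}

lemma isUnit_of_one_le_norm {φ : X →ᵇ 𝕂} (hφ : ∀ x, 1 ≤ ‖φ x‖) : IsUnit φ := by
  have h_ne (x : X) : φ x ≠ 0 := norm_pos_iff.1 (one_pos.trans_le (hφ x))
  let ψ : X →ᵇ 𝕂 := ofNormedAddCommGroup (fun x => (φ x)⁻¹) (φ.continuous.inv₀ h_ne) 1 fun x => by
    rw [norm_inv]
    exact inv_le_one_of_one_le₀ (hφ x)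
  exact .of_mul_eq_one ψ (ext fun x => mul_inv_cancel₀ (h_ne x))

lemma norm_star_mul_self_add_star_mul_self_apply (φ ψ : X →ᵇ 𝕂) (x : X) :
    ‖(star φ * φ + star ψ * ψ) x‖ = ‖φ x‖ ^ 2 + ‖ψ x‖ ^ 2 := by
  have h : (star φ * φ + star ψ * ψ) x = ((‖φ x‖ ^ 2 + ‖ψ x‖ ^ 2 : ℝ) : 𝕂) := by
    simp [RCLike.conj_mul]
  rw [h, RCLike.norm_ofReal, abs_of_nonneg (by positivity)]

lemma exists_ultrafilter_forall_norm_lt_one {I : Ideal (X →ᵇ 𝕂)} (hI : I ≠ ⊤) :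
    ∃ l : Ultrafilter X, ∀ φ ∈ I, ∀ᶠ x in l, ‖φ x‖ < 1 := by
  let S (φ : I) : Filter X := 𝓟 {x | ‖(φ : X →ᵇ 𝕂) x‖ < 1}
  have h_directed : Directed (· ≥ ·) S := fun φ ψ => by
    refine ⟨⟨star φ.1 * φ.1 + star ψ.1 * ψ.1,
      I.add_mem (I.mul_mem_left _ φ.2) (I.mul_mem_left _ ψ.2)⟩, ?_, ?_⟩ <;>
    · refine principal_mono.2 fun x hx => ?_
      rw [Set.mem_ofPred_eq, norm_star_mul_self_add_star_mul_self_apply] at hx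
      rw [Set.mem_ofPred_eq, ← sq_lt_one_iff₀ (norm_nonneg _)]
      nlinarith [sq_nonneg ‖φ.1 x‖, sq_nonneg ‖ψ.1 x‖]
  have h_neBot : NeBot (iInf S) := by
    refine iInf_neBot_of_directed' h_directed fun φ => principal_neBot_iff.2 ?_
    by_contra h_empty
    refine hI (I.eq_top_of_isUnit_mem φ.2 (isUnit_of_one_le_norm fun x => ?_))
    exact not_lt.1 fun hx => h_empty ⟨x, hx⟩
  exact ⟨.of (iInf S), fun φ hφ =>
    (Ultrafilter.of_le _).trans (iInf_le S ⟨φ, hφ⟩) (mem_principal_self _)⟩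

lemma exists_ultrafilter_forall_tendsto_zero {I : Ideal (X →ᵇ 𝕂)} (hI : I ≠ ⊤) :
    ∃ l : Ultrafilter X, ∀ φ ∈ I, Tendsto φ l (𝓝 0) := by
  obtain ⟨l, hl⟩ := exists_ultrafilter_forall_norm_lt_one hI
  refine ⟨l, fun φ hφ => Metric.tendsto_nhds.2 fun ε hε => ?_⟩
  filter_upwards [hl _ (I.mul_mem_left (BoundedContinuousFunction.const X ((ε⁻¹ : ℝ) : 𝕂)) hφ)]
    with x hx
  rw [BoundedContinuousFunction.mul_apply, BoundedContinuousFunction.const_apply, norm_mul,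
    RCLike.norm_ofReal, abs_of_pos (inv_pos.2 hε), inv_mul_lt_one₀ hε] at hx
  rwa [dist_zero_right]

end ScalarFunctions

section Support

variable {𝕂 X Y E F Φ : Type} [RCLike 𝕂] [TopologicalSpace X] [TopologicalSpace Y]
  [NormedAddCommGroup E] [NormedSpace 𝕂 E] [NormedAddCommGroup F]

lemma SeparatingB.exists_ne_zero {T : (X →ᵇ E) → (Y →ᵇ F)} (hT : SeparatingB T) {f g : X →ᵇ E}
    {y : Y} (hf : T f y ≠ 0) (hg : T g y ≠ 0) : ∃ x, f x ≠ 0 ∧ g x ≠ 0 := by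
  by_contra! h
  have h_mul := hT f g (fun x => by simpa [or_iff_not_imp_left] using h x) y
  simp [hf, hg] at h_mul

variable [FunLike Φ (X →ᵇ E) (Y →ᵇ F)] [AddMonoidHomClass Φ (X →ᵇ E) (Y →ᵇ F)]

variable (𝕂) in
/-- The ideal of the scalar functions annihilating the functional `f ↦ T f y`. Its zeros in the
Stone–Čech compactification of `X` are the points supporting that functional. -/
def supportIdeal (T : Φ) (y : Y) : Ideal (X →ᵇ 𝕂) where
  carrier := {φ | ∀ f : X →ᵇ E, T (φ • f) y = 0}
  zero_mem' f := by simp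
  add_mem' hφ hψ f := by
    rw [add_smul, map_add, BoundedContinuousFunction.add_apply, hφ, hψ, add_zero]
  smul_mem' c φ hφ f := by
    rw [smul_eq_mul, mul_comm, mul_smul]
    exact hφ (c • f)

variable (𝕂) in
/-- The filter `l` supports the functional `f ↦ T f y`: it converges, in the Stone–Čech
compactification of `X`, to zeros of `supportIdeal 𝕂 T y`. -/
def SupportsAt (T : Φ) (y : Y) (l : Filter X) : Prop :=
  ∀ φ ∈ supportIdeal 𝕂 T y, Tendsto φ l (𝓝 0)

lemma exists_supportsAt {T : Φ} {y : Y} {f : X →ᵇ E} (hf : T f y ≠ 0) :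
    ∃ l : Ultrafilter X, SupportsAt 𝕂 T y l := by
  refine exists_ultrafilter_forall_tendsto_zero fun h_top => hf ?_
  have h_one : (1 : X →ᵇ 𝕂) ∈ supportIdeal 𝕂 T y := h_top ▸ Submodule.mem_top
  simpa only [one_smul] using h_one f

lemma SupportsAt.apply_eq_zero_of_eventuallyEq_zero {M : Type*} [TopologicalSpace M] [T4Space M]
    {T : Φ} (hT : SeparatingB T) {y : Y} {l : Filter X} [l.NeBot] (hl : SupportsAt 𝕂 T y l)
    {f : X → M} (hf : Continuous f) {e : M} (hfl : Tendsto f l (𝓝 e)) {g : X →ᵇ E}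
    (hg : g =ᶠ[comap f (𝓝 e)] 0) : T g y = 0 := by
  by_contra h_ne
  obtain ⟨χ, hχ_zero, hχ_one⟩ := exists_cutoff 𝕂 hf hg
  have hχ_mem : χ ∈ supportIdeal 𝕂 T y := fun h => by
    by_contra hχ_ne
    obtain ⟨x, hχx, hgx⟩ := hT.exists_ne_zero hχ_ne h_ne
    exact hχx (show χ x • h x = 0 by rw [hχ_zero x hgx, zero_smul])
  have hχ_lim : Tendsto χ l (𝓝 1) :=
    tendsto_const_nhds.congr' (hχ_one.filter_mono hfl.le_comap).symm
  exact zero_ne_one (tendsto_nhds_unique (hl χ hχ_mem) hχ_lim)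

end Support

section Biseparating

variable {𝕂 X Y E F : Type} [RCLike 𝕂] [TopologicalSpace X] [TopologicalSpace Y]
  [NormedAddCommGroup E] [NormedSpace 𝕂 E] [NormedAddCommGroup F] [NormedSpace 𝕂 F]
  {T : (X →ᵇ E) ≃ₗ[𝕂] (Y →ᵇ F)}

lemma SeparatingB.exists_apply_eq_zero (hT : SeparatingB T) (hT' : SeparatingB T.symm)
    {M : Type*} [TopologicalSpace M] [T4Space M] {f : X → M} (hf : Continuous f) {h : X →ᵇ E}
    {x : X} (hx : h =ᶠ[comap f (𝓝 (f x))] 0) {k : Y →ᵇ F} (hk : T.symm k x ≠ 0) :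
    ∃ y, k y ≠ 0 ∧ T h y = 0 := by
  obtain ⟨χ, hχ_zero, hχ_one⟩ := exists_cutoff 𝕂 hf hx
  have hχx : χ x = 1 := (eventually_comap.1 hχ_one).self_of_nhds x rfl
  let u := χ • T.symm k
  have hux : T.symm (T u) x ≠ 0 := by
    rw [T.symm_apply_apply]
    exact smul_ne_zero (hχx ▸ one_ne_zero) hk
  obtain ⟨y, huy, hky⟩ := hT'.exists_ne_zero hux hk
  refine ⟨y, hky, by_contra fun h_ne => ?_⟩
  obtain ⟨x', hux', hhx'⟩ := hT.exists_ne_zero huy h_ne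
  exact hux' (show χ x' • T.symm k x' = 0 by rw [hχ_zero x' hhx', zero_smul])

lemma SupportsAt.exists_apply_ne_zero (hT : SeparatingB T) {y : Y} {l : Filter X} [l.NeBot]
    (hl : SupportsAt 𝕂 T y l) {f : X →ᵇ E} {e : E} (hfl : Tendsto f l (𝓝 e)) (hfy : T f y ≠ 0)
    {s : Set X} (hs : s ∈ comap f (𝓝 e)) {k : Y →ᵇ F} (hk : k y ≠ 0) :
    ∃ x ∈ s, f x ≠ 0 ∧ T.symm k x ≠ 0 := by
  obtain ⟨χ, hχ_zero, hχ_one⟩ := exists_cutoff 𝕂 f.continuous hs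
  have h_diff : T (f - χ • f) y = 0 := by
    refine hl.apply_eq_zero_of_eventuallyEq_zero hT f.continuous hfl ?_
    filter_upwards [hχ_one] with x hx
    change f x - χ x • f x = 0
    rw [hx, Pi.one_apply, one_smul, sub_self]
  have hχf : T (χ • f) y ≠ 0 := by
    rw [map_sub, BoundedContinuousFunction.sub_apply, sub_eq_zero] at h_diff
    rwa [← h_diff]
  obtain ⟨x, hχfx, hkx⟩ := hT.exists_ne_zero hχf (g := T.symm k) (by rwa [T.apply_symm_apply])
  replace hχfx : χ x • f x ≠ 0 := hχfx
  exact ⟨x, by_contra fun hxs => left_ne_zero_of_smul hχfx (hχ_zero x hxs),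
    right_ne_zero_of_smul hχfx, hkx⟩

lemma SupportsAt.exists_forall_norm_mul_le (hT : SeparatingB T) (hT' : SeparatingB T.symm) {y : Y}
    {l : Filter X} [l.NeBot] (hl : SupportsAt 𝕂 T y l) {f : X →ᵇ E} {e : E}
    (hfl : Tendsto f l (𝓝 e)) {δ : ℝ} (hδ : 0 ≤ δ) (hfy : δ < ‖T f y‖) {s : Set X}
    (hs : s ∈ comap f (𝓝 e)) :
    ∃ x ∈ s, f x ≠ 0 ∧
      ∀ (a : 𝕂) (g : X →ᵇ E), g =ᶠ[comap f (𝓝 (f x))] a • f → ‖a‖ * δ ≤ ‖T g‖ := by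
  have hfy_ne : T f y ≠ 0 := norm_pos_iff.1 (hδ.trans_lt hfy)
  obtain ⟨β, hβ_zero, hβ_one⟩ := exists_cutoff 𝕂 (T f).continuous
    (preimage_mem_comap ((isOpen_lt continuous_const continuous_norm).mem_nhds hfy))
  have hβy : β y = 1 := (eventually_comap.1 hβ_one).self_of_nhds y rfl
  obtain ⟨x, hxs, hfx, hkx⟩ := hl.exists_apply_ne_zero hT hfl hfy_ne hs (k := β • T f)
    (smul_ne_zero (hβy ▸ one_ne_zero) hfy_ne)
  refine ⟨x, hxs, hfx, fun a g hg => ?_⟩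
  obtain ⟨y', hky', hgy'⟩ := hT.exists_apply_eq_zero hT' f.continuous (h := g - a • f)
    hg.sub_eq hkx
  rw [map_sub, map_smul, BoundedContinuousFunction.sub_apply, sub_eq_zero] at hgy'
  have h_lower : δ < ‖T f y'‖ :=
    by_contra fun h => left_ne_zero_of_smul hky' (hβ_zero y' h)
  calc ‖a‖ * δ ≤ ‖a‖ * ‖T f y'‖ := by gcongr
    _ = ‖T g y'‖ := by rw [hgy', BoundedContinuousFunction.smul_apply, norm_smul]
    _ ≤ ‖T g‖ := (T g).norm_coe_le_norm y'

lemma SupportsAt.apply_eq_zero_of_tendsto_zero (hT : SeparatingB T) (hT' : SeparatingB T.symm)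
    {y : Y} {l : Filter X} [l.NeBot] (hl : SupportsAt 𝕂 T y l) {f : X →ᵇ E}
    (hfl : Tendsto f l (𝓝 0)) : T f y = 0 := by
  by_contra hfy
  obtain ⟨δ, hδ, hδf⟩ := exists_between (norm_pos_iff.2 hfy)
  let M := max ‖T (radialStairComp 𝕂 0 f)‖ ‖T (radialStairComp 𝕂 (1 / 2) f)‖
  obtain ⟨K, hK⟩ := exists_gt (M / δ)
  obtain ⟨x, hx_stair, hfx, hx_le⟩ := hl.exists_forall_norm_mul_le hT hT' hfl hδ.le hδf
    (preimage_mem_comap (eventually_nhdsWithin_iff.1 (eventually_radialStair_eventuallyEq 𝕂 K)))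
  obtain ⟨a, haK, ha⟩ := hx_stair hfx
  have haM : ‖a‖ * δ ≤ M := by
    rcases ha with ha | ha
    · exact (hx_le a _ (radialStairComp_eventuallyEq ha)).trans (le_max_left _ _)
    · exact (hx_le a _ (radialStairComp_eventuallyEq ha)).trans (le_max_right _ _)
  exact ((div_lt_iff₀ hδ).1 (hK.trans_le haK)).not_ge haM

/-- The linear map `E → F` sending `e` to the value at `y` of the image under `T` of the constant
function `e`. It is the fibre of `T` over `y`: every `T f y` is one of its values. -/
def constEval (T : (X →ᵇ E) ≃ₗ[𝕂] (Y →ᵇ F)) (y : Y) : E →ₗ[𝕂] F where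
  toFun e := T (BoundedContinuousFunction.const X e) y
  map_add' e e' := congrArg (· y) (T.map_add (.const X e) (.const X e'))
  map_smul' a e := congrArg (· y) (T.map_smul a (.const X e))

lemma exists_norm_le_apply_eq_constEval [FiniteDimensional 𝕂 E] (hT : SeparatingB T)
    (hT' : SeparatingB T.symm) (f : X →ᵇ E) (y : Y) :
    ∃ e : E, ‖e‖ ≤ ‖f‖ ∧ T f y = constEval T y e := by
  by_cases hfy : T f y = 0
  · exact ⟨0, by simp, by rw [hfy, map_zero]⟩
  obtain ⟨l, hl⟩ := exists_supportsAt (𝕂 := 𝕂) hfy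
  have : ProperSpace E := FiniteDimensional.proper 𝕂 E
  have h_mem : ∀ᶠ v in l.map f, v ∈ Metric.closedBall (0 : E) ‖f‖ :=
    eventually_map.2 <| .of_forall fun x => mem_closedBall_zero_iff.2 (f.norm_coe_le_norm x)
  obtain ⟨e, he, hfe⟩ :=
    (isCompact_closedBall (0 : E) ‖f‖).ultrafilter_le_nhds (l.map f) (le_principal_iff.2 h_mem)
  refine ⟨e, mem_closedBall_zero_iff.1 he, ?_⟩
  have h_lim : Tendsto (f - BoundedContinuousFunction.const X e) l (𝓝 0) :=
    sub_self e ▸ Tendsto.sub_const hfe e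
  have h_zero := hl.apply_eq_zero_of_tendsto_zero hT hT' h_lim
  rwa [map_sub, BoundedContinuousFunction.sub_apply, sub_eq_zero] at h_zero

lemma constEval_surjective [FiniteDimensional 𝕂 E] (hT : SeparatingB T)
    (hT' : SeparatingB T.symm) (y : Y) : Function.Surjective (constEval T y) := fun v => by
  obtain ⟨e, -, he⟩ := exists_norm_le_apply_eq_constEval hT hT'
    (T.symm (BoundedContinuousFunction.const Y v)) y
  exact ⟨e, by rw [← he, T.apply_symm_apply, const_apply]⟩

lemma continuous_apply_of_separatingB [FiniteDimensional 𝕂 E] (hT : SeparatingB T)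
    (hT' : SeparatingB T.symm) (y : Y) : Continuous fun f => T f y := by
  let J := (constEval T y).toContinuousLinearMap
  refine AddMonoidHomClass.continuous_of_bound
    ((evalCLM 𝕂 y).toLinearMap ∘ₗ T.toLinearMap) ‖J‖ fun f => ?_
  obtain ⟨e, hef, he⟩ := exists_norm_le_apply_eq_constEval hT hT' f y
  calc ‖T f y‖ = ‖J e‖ := by rw [he]; rfl
    _ ≤ ‖J‖ * ‖f‖ := J.le_opNorm_of_le hef

end Biseparating

lemma continuous_of_forall_continuous_apply {𝕂 V Y F : Type*} [NontriviallyNormedField 𝕂]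
    [NormedAddCommGroup V] [NormedSpace 𝕂 V] [CompleteSpace V] [TopologicalSpace Y]
    [NormedAddCommGroup F] [NormedSpace 𝕂 F] [CompleteSpace F] (T : V →ₗ[𝕂] (Y →ᵇ F))
    (hT : ∀ y, Continuous fun v => T v y) : Continuous T := by
  refine T.continuous_of_seq_closed_graph fun u v g hu hTu => ext fun y => ?_
  exact tendsto_nhds_unique (((evalCLM 𝕂 y).continuous.tendsto g).comp hTu)
    (((hT y).tendsto v).comp hu)

theorem stmt9_general {𝕂 X Y E F : Type} [RCLike 𝕂] [TopologicalSpace X] [TopologicalSpace Y]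
    [NormedAddCommGroup E] [NormedSpace 𝕂 E] [FiniteDimensional 𝕂 E]
    [NormedAddCommGroup F] [NormedSpace 𝕂 F]
    (T : (X →ᵇ E) ≃ₗ[𝕂] (Y →ᵇ F)) (hT : SeparatingB ⇑T) (hT' : SeparatingB ⇑T.symm) :
    Continuous ⇑T ∧ Continuous ⇑T.symm := by
  rcases isEmpty_or_nonempty Y with _ | ⟨⟨y⟩⟩
  · have : Subsingleton (Y →ᵇ F) := ⟨fun _ _ => ext isEmptyElim⟩
    have : Subsingleton (X →ᵇ E) := T.toEquiv.subsingleton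
    exact ⟨continuous_of_discreteTopology, continuous_of_discreteTopology⟩
  have : FiniteDimensional 𝕂 F := .of_surjective _ (constEval_surjective hT hT' y)
  have : CompleteSpace E := FiniteDimensional.complete 𝕂 E
  have : CompleteSpace F := FiniteDimensional.complete 𝕂 F
  have hT_cont : Continuous T :=
    continuous_of_forall_continuous_apply T.toLinearMap (continuous_apply_of_separatingB hT hT')
  exact ⟨hT_cont, T.continuous_symm hT_cont⟩

/-- `X →ᵇ E` and `Y →ᵇ F` carry the supremum norm (the default norm in Mathlib); a linear
biseparating map between them, with `E` finite-dimensional, is continuous with continuous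
inverse. -/
theorem stmt9 {𝕂 X Y E F : Type} [RCLike 𝕂]
    [TopologicalSpace X] [CompletelyRegularSpace X] [T2Space X]
    [TopologicalSpace Y] [CompletelyRegularSpace Y] [T2Space Y]
    [NormedAddCommGroup E] [NormedSpace 𝕂 E] [Nontrivial E] [FiniteDimensional 𝕂 E]
    [NormedAddCommGroup F] [NormedSpace 𝕂 F] [Nontrivial F]
    (hX : Realcompact X) (hY : Realcompact Y)
    (T : (X →ᵇ E) ≃ₗ[𝕂] (Y →ᵇ F)) (hT : SeparatingB ⇑T) (hT' : SeparatingB ⇑T.symm) :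
    Continuous ⇑T ∧ Continuous ⇑T.symm :=
  stmt9_general T hT hT'
end

section
/- Let X and Y be realcompact completely regular Hausdorff topological spaces, let E and F be infinite-dimensional normed spaces over 𝕂, and let T : C_b(X,E) → C_b(Y,F) be a continuous 𝕂-linear biseparating map. For each y ∈ Y define J_y : E → F by J_y(e) = (T ê)(y). Then each J_y is a continuous 𝕂-linear bijection from E onto F with ‖J_y(e)‖ ≤ ‖T‖·‖e‖ for all e ∈ E, and the map y ↦ J_y is continuous from Y into the space of continuous linear bijections from E onto F endowed with the strong operator topology. -/
open Filter Topology BoundedContinuousFunction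

/-!
A separating map `T` has, at each `y`, a support point `h y ∈ βX`: otherwise a partition of unity on
`βX` would write every `f` as a sum of functions each disjoint from some `f_p` with `T f_p y ≠ 0`,
whence `T f y = 0`. Continuity of `T` gives `T (φ f) y = φ (h y) T f y` for continuous `φ` on `βX`.

If `h y ∉ X`, realcompactness provides a continuous `φ` on `βX` with `φ (h y) = 0` and no zero on
`X`. Take a bounded `1`-separated sequence `v` in the infinite-dimensional space `F`. Gluing the
functions `T⁻¹ v̂_m` along the level sets of `φ` yields a bounded continuous `f` such that `T f`
runs through infinitely many of the values `v_m` as `z → y`, contradicting the continuity of `T f`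
at `y`. Boundedness of `f` holds because multiplying the `m`-th layer of `f` by `a_m`, for any null
sequence `a`, gives a function bounded by `T⁻¹` of a continuous function on `Y`. Hence `h y ∈ X`,
and `J_y (f (h y)) = T f y` makes `J_y` surjective.

If `J_y e = 0` with `e ≠ 0`, then `g = T ê` has nonzero values arbitrarily close to `y`. Multiplying
`g` by `‖g‖^(-1/2)`, rounded to a locally constant factor on the plateaus, gives a bounded function
whose preimage takes values that are arbitrarily large multiples of `e`.
-/

section Staircase

/-- The half-period of `sin ∘ log` to which `t` belongs, counted so that it tends to infinity as
`t → 0`. On the logarithmic scale, rescaling `t` only shifts the layers. Nonpositive values of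
`-log t` all go to layer `0`, and so does `t = 0` since `log 0 = 0`. -/
noncomputable def layer (t : ℝ) : ℕ := ⌊-Real.log t / Real.pi⌋₊

/-- The set where the cutoff factor in `staircase` is `1`. -/
def plateau : Set ℝ := {t | 1 / 2 < |Real.sin (Real.log t)|}

/-- The function equal to `u m` on the plateau of the `m`-th layer and cut off continuously to `0`
at the zeros of `sin ∘ log`, where consecutive layers meet. It vanishes at `t = 0`, but is
discontinuous there unless `u m → 0`. -/
noncomputable def staircase {V : Type*} [SMul ℝ V] (u : ℕ → V) (t : ℝ) : V :=
  min 1 (2 * |Real.sin (Real.log t)|) • u (layer t)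

lemma layer_le_inv_abs (t : ℝ) : (layer t : ℝ) ≤ |t|⁻¹ := by
  rcases eq_or_ne t 0 with rfl | ht
  · simp [layer]
  have hlog : -Real.log t ≤ |t|⁻¹ := by
    rw [← Real.log_abs, ← Real.log_inv]
    exact Real.log_le_self (by positivity)
  rcases le_total (-Real.log t / Real.pi) 0 with hneg | hnonneg
  · simp [layer, Nat.floor_of_nonpos hneg]
  · calc (layer t : ℝ) ≤ -Real.log t / Real.pi := Nat.floor_le hnonneg
      _ ≤ |t|⁻¹ / Real.pi := by gcongr
      _ ≤ |t|⁻¹ := div_le_self (by positivity) (by linarith [Real.pi_gt_three])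

lemma tendsto_layer_nhdsNE_zero : Tendsto layer (𝓝[≠] 0) atTop :=
  tendsto_nat_floor_atTop.comp
    ((tendsto_neg_atBot_atTop.comp Real.tendsto_log_nhdsNE_zero).atTop_div_const Real.pi_pos)

lemma staircase_of_sin_log_eq_zero {V : Type*} [Zero V] [SMulWithZero ℝ V] (u : ℕ → V) {t : ℝ}
    (ht : Real.sin (Real.log t) = 0) : staircase u t = 0 := by
  simp [staircase, ht]

lemma ne_zero_of_sin_log_ne_zero {t : ℝ} (ht : Real.sin (Real.log t) ≠ 0) : t ≠ 0 := by
  rintro rfl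
  simp at ht

lemma eventually_layer_eq {t : ℝ} (ht : Real.sin (Real.log t) ≠ 0) :
    ∀ᶠ s in 𝓝 t, layer s = layer t := by
  have hcont : ContinuousAt (fun s => -Real.log s / Real.pi) t :=
    (Real.continuousAt_log (ne_zero_of_sin_log_ne_zero ht)).neg.div_const _
  rcases lt_or_ge (-Real.log t / Real.pi) 0 with hneg | hnonneg
  · filter_upwards [hcont.eventually (gt_mem_nhds hneg)] with s hs
    simp only [layer, Nat.floor_of_nonpos hneg.le, Nat.floor_of_nonpos hs.le]
  · have hne : (layer t : ℝ) ≠ -Real.log t / Real.pi := fun h => ht <| by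
      rw [eq_div_iff Real.pi_ne_zero] at h
      rw [← neg_eq_zero, ← Real.sin_neg, ← h, Real.sin_nat_mul_pi]
    filter_upwards [hcont.eventually (lt_mem_nhds ((Nat.floor_le hnonneg).lt_of_ne hne)),
      hcont.eventually (gt_mem_nhds (Nat.lt_floor_add_one _))] with s hs hs'
    exact (Nat.floor_eq_iff ((Nat.cast_nonneg _).trans hs.le)).2 ⟨hs.le, hs'⟩

lemma mem_plateau_or_mul_mem_plateau {t : ℝ} (ht : t ≠ 0) :
    t ∈ plateau ∨ Real.exp (Real.pi / 2) * t ∈ plateau := by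
  simp only [plateau, Set.mem_ofPred_eq, Real.log_mul (Real.exp_ne_zero _) ht, Real.log_exp,
    add_comm (Real.pi / 2), Real.sin_add_pi_div_two]
  by_contra! h
  have hsin := pow_le_pow_left₀ (abs_nonneg _) h.1 2
  have hcos := pow_le_pow_left₀ (abs_nonneg _) h.2 2
  rw [sq_abs] at hsin hcos
  linarith [Real.sin_sq_add_cos_sq (Real.log t)]

lemma exists_frequently_mul_mem_plateau {α : Type*} {l : Filter α} {ψ : α → ℝ}
    (hψ : ∃ᶠ a in l, ψ a ≠ 0) : ∃ c > 0, ∃ᶠ a in l, c * ψ a ∈ plateau := by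
  rcases frequently_or_distrib.1 (hψ.mono fun _ => mem_plateau_or_mul_mem_plateau) with h | h
  · exact ⟨1, one_pos, by simpa only [one_mul] using h⟩
  · exact ⟨_, Real.exp_pos _, h⟩

lemma sin_log_ne_zero_of_mem_plateau {t : ℝ} (ht : t ∈ plateau) :
    Real.sin (Real.log t) ≠ 0 :=
  abs_pos.1 (one_half_pos.trans ht)

lemma eventually_mem_plateau {t : ℝ} (ht : t ∈ plateau) : ∀ᶠ s in 𝓝 t, s ∈ plateau :=
  have hcont : ContinuousAt (fun s => |Real.sin (Real.log s)|) t :=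
    (Real.continuous_sin.continuousAt.comp (Real.continuousAt_log
      (ne_zero_of_sin_log_ne_zero (sin_log_ne_zero_of_mem_plateau ht)))).abs
  hcont.eventually (lt_mem_nhds ht)

lemma map_staircase {V W : Type*} [AddCommMonoid V] [Module ℝ V] [AddCommMonoid W] [Module ℝ W]
    (L : V →ₗ[ℝ] W) (u : ℕ → V) (t : ℝ) :
    L (staircase u t) = staircase (fun m => L (u m)) t :=
  map_smul ..

lemma staircase_of_mem_plateau {V : Type*} [MulAction ℝ V] (u : ℕ → V) {t : ℝ}
    (ht : t ∈ plateau) : staircase u t = u (layer t) := by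
  have h : 1 / 2 < |Real.sin (Real.log t)| := ht
  rw [staircase, min_eq_left (by linarith), one_smul]

lemma eventually_staircase_eq {V : Type*} [MulAction ℝ V] (u : ℕ → V) {t : ℝ}
    (ht : t ∈ plateau) : ∀ᶠ s in 𝓝 t, staircase u s = u (layer t) := by
  filter_upwards [eventually_mem_plateau ht,
    eventually_layer_eq (sin_log_ne_zero_of_mem_plateau ht)] with s hs hlayer
  rw [staircase_of_mem_plateau u hs, hlayer]

lemma staircase_smul {V : Type*} [AddCommMonoid V] [Module ℝ V] (a : ℕ → ℝ) (u : ℕ → V) (t : ℝ) :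
    staircase (fun m => a m • u m) t = a (layer t) • staircase u t :=
  smul_comm ..

variable {V : Type*} [NormedAddCommGroup V] [NormedSpace ℝ V] (u : ℕ → V)

lemma norm_staircase_le (t : ℝ) : ‖staircase u t‖ ≤ ‖u (layer t)‖ := by
  rw [staircase, norm_smul, Real.norm_of_nonneg (by positivity)]
  exact mul_le_of_le_one_left (norm_nonneg _) (min_le_left _ _)

lemma continuousAt_staircase {t : ℝ} (ht : t ≠ 0) : ContinuousAt (staircase u) t := by
  have hlog := Real.continuousAt_log ht
  have hcut : ContinuousAt (fun s => min 1 (2 * |Real.sin (Real.log s)|)) t := by fun_prop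
  by_cases hsin : Real.sin (Real.log t) = 0
  · have hbdd : IsBoundedUnder (· ≤ ·) (𝓝 t) fun s => ‖u (layer s)‖ := by
      refine isBoundedUnder_of_eventually_le
        (a := ∑ i ∈ Finset.range (⌊-Real.log t / Real.pi + 1⌋₊ + 1), ‖u i‖) ?_
      filter_upwards [(hlog.neg.div_const Real.pi).eventually (gt_mem_nhds (lt_add_one _))]
        with s hs
      exact Finset.single_le_sum (f := fun i => ‖u i‖) (fun _ _ => norm_nonneg _)
        (Finset.mem_range_succ_iff.2 (Nat.floor_le_floor hs.le))
    rw [ContinuousAt, staircase_of_sin_log_eq_zero u hsin]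
    exact Tendsto.zero_smul_isBoundedUnder_le (by simpa [hsin] using hcut.tendsto) hbdd
  · refine (hcut.smul (continuousAt_const (y := u (layer t)))).congr ?_
    filter_upwards [eventually_layer_eq hsin] with s hs
    simp only [Pi.smul_apply', staircase, hs]

lemma continuous_staircase {u : ℕ → V} (hu : Tendsto u atTop (𝓝 0)) :
    Continuous (staircase u) := by
  refine continuous_iff_continuousAt.2 fun t => ?_
  rcases eq_or_ne t 0 with rfl | ht
  · rw [continuousAt_iff_punctured_nhds,
      staircase_of_sin_log_eq_zero u (by simp)]
    exact squeeze_zero_norm (norm_staircase_le u)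
      ((tendsto_zero_iff_norm_tendsto_zero.1 hu).comp tendsto_layer_nhdsNE_zero)
  · exact continuousAt_staircase u ht

end Staircase

lemma bddAbove_range_of_forall_tendsto_zero_mul {α : Type*} {f : α → ℝ} {ℓ : α → ℕ}
    (hℓ : ∀ m, BddAbove (f '' {x | ℓ x ≤ m}))
    (hmul : ∀ a : ℕ → ℝ, Tendsto a atTop (𝓝 0) → BddAbove (Set.range fun x => a (ℓ x) * f x)) :
    BddAbove (Set.range f) := by
  by_contra hunb
  set b : ℕ → ℝ := fun m => sSup (f '' {x | ℓ x ≤ m})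
  have le_b {x m} (h : ℓ x ≤ m) : f x ≤ b m := le_csSup (hℓ m) ⟨x, h, rfl⟩
  have b_atTop : Tendsto b atTop atTop := by
    refine tendsto_atTop.2 fun K => ?_
    obtain ⟨_, ⟨x, rfl⟩, hx⟩ := not_bddAbove_iff.1 hunb K
    filter_upwards [eventually_ge_atTop (ℓ x)] with m hm
    exact hx.le.trans (le_b hm)
  -- The weights `1 / √(b m)` still tend to `0`, but the weighted `f` grows like `√(b m)`.
  obtain ⟨K, hK⟩ := hmul (fun m => (√(b m))⁻¹)
    (Real.tendsto_sqrt_atTop.comp b_atTop).inv_tendsto_atTop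
  have le_mul_sqrt {x m} (h : ℓ x ≤ m) : f x ≤ |K| * √(b m) := by
    rcases le_or_gt (f x) 0 with hx | hx
    · exact hx.trans (by positivity)
    have hb_pos : 0 < √(b (ℓ x)) := Real.sqrt_pos.2 (hx.trans_le (le_b le_rfl))
    calc f x ≤ K * √(b (ℓ x)) := by
          rw [← div_le_iff₀ hb_pos, div_eq_inv_mul]
          exact hK ⟨x, rfl⟩
      _ ≤ |K| * √(b m) := by
          gcongr
          · exact le_abs_self K
          · exact csSup_le_csSup (hℓ m) ⟨_, x, le_refl (ℓ x), rfl⟩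
              (Set.image_mono fun z (hz : ℓ z ≤ ℓ x) => hz.trans h)
  have sqrt_b_le {m} (hm : 0 < b m) : √(b m) ≤ |K| := by
    have hb_le : b m ≤ |K| * √(b m) :=
      Real.sSup_le (Set.forall_mem_image.2 fun _ => le_mul_sqrt) (by positivity)
    have hb_pos := Real.sqrt_pos.2 hm
    nlinarith [Real.mul_self_sqrt hm.le]
  obtain ⟨m, hm, hm'⟩ := ((b_atTop.eventually_gt_atTop 0).and
    ((Real.tendsto_sqrt_atTop.comp b_atTop).eventually_gt_atTop |K|)).exists
  exact hm'.not_ge (sqrt_b_le hm)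

section BoundedContinuousFunction

lemma mem_closure_setOf_eventually_eq_zero {X E : Type*} [TopologicalSpace X]
    [NormedAddCommGroup E] [NormedSpace ℝ E] {l : Filter X} {f : X →ᵇ E}
    (hf : Tendsto f l (𝓝 0)) : f ∈ closure {g : X →ᵇ E | ∀ᶠ x in l, g x = 0} := by
  refine Metric.mem_closure_iff.2 fun ε hε => ?_
  let θ (t : ℝ) : ℝ := max 0 (min 1 (4 * t / ε - 1))
  have θ_nonneg (t : ℝ) : 0 ≤ θ t := le_max_left _ _
  have θ_le_one (t : ℝ) : θ t ≤ 1 := max_le zero_le_one (min_le_left _ _)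
  let g : X →ᵇ E := .ofNormedAddCommGroup (fun x => θ ‖f x‖ • f x) (by fun_prop) ‖f‖ fun x => by
    rw [norm_smul, Real.norm_of_nonneg (θ_nonneg _)]
    exact (mul_le_of_le_one_left (norm_nonneg _) (θ_le_one _)).trans (f.norm_coe_le_norm x)
  refine ⟨g, ?_, ((dist_le (half_pos hε).le).2 fun x => ?_).trans_lt (half_lt_self hε)⟩
  · filter_upwards [hf.norm.eventually (gt_mem_nhds (norm_zero.trans_lt (div_pos hε four_pos)))]
      with x hx
    have hθ : θ ‖f x‖ = 0 := max_eq_left <| (min_le_right _ _).trans <| by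
      rw [sub_nonpos, div_le_one hε]
      linarith
    change θ ‖f x‖ • f x = 0
    rw [hθ, zero_smul]
  · change dist (f x) (θ ‖f x‖ • f x) ≤ ε / 2
    have hsub : f x - θ ‖f x‖ • f x = (1 - θ ‖f x‖) • f x := by rw [sub_smul, one_smul]
    rw [dist_eq_norm, hsub, norm_smul, Real.norm_of_nonneg (sub_nonneg.2 (θ_le_one _))]
    rcases le_total ‖f x‖ (ε / 2) with hx | hx
    · exact (mul_le_of_le_one_left (norm_nonneg _) (sub_le_self _ (θ_nonneg _))).trans hx
    · have hθ : θ ‖f x‖ = 1 := by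
        have : 1 ≤ 4 * ‖f x‖ / ε - 1 := by
          rw [le_sub_iff_add_le, le_div_iff₀ hε]
          linarith
        simp only [θ, min_eq_left this, zero_le_one, max_eq_right]
      rw [hθ, sub_self, zero_mul]
      exact (half_pos hε).le

lemma exists_boundedContinuous_one_zero {Y : Type*} [TopologicalSpace Y]
    [CompletelyRegularSpace Y] {y : Y} {W : Set Y} (hW : W ∈ 𝓝 y) :
    ∃ β : Y →ᵇ ℝ, β y = 1 ∧ ∀ z ∉ W, β z = 0 := by
  obtain ⟨f, hf, hfy, hfW⟩ := CompletelyRegularSpace.completely_regular_isOpen y (interior W)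
    isOpen_interior (mem_interior_iff_mem_nhds.2 hW)
  refine ⟨.ofNormedAddCommGroup (fun z => 1 - (f z : ℝ)) (by fun_prop) 1 fun z => ?_, ?_,
    fun z hz => ?_⟩
  · rw [Real.norm_of_nonneg (unitInterval.one_minus_nonneg _)]
    exact unitInterval.one_minus_le_one _
  · simp [hfy]
  · have : f z = 1 := hfW fun h => hz (interior_subset h)
    simp [this]

/-- The restriction to `X` of a function on its Stone–Čech compactification. -/
noncomputable def stoneCechRestrict {X : Type*} [TopologicalSpace X] (φ : StoneCech X →ᵇ ℝ) :
    X →ᵇ ℝ :=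
  φ.compContinuous ⟨stoneCechUnit, continuous_stoneCechUnit⟩

lemma stoneCechRestrict_smul_apply {X E : Type*} [TopologicalSpace X] [NormedAddCommGroup E]
    [NormedSpace ℝ E] (φ : StoneCech X →ᵇ ℝ) (f : X →ᵇ E) (x : X) :
    (stoneCechRestrict φ • f) x = φ (stoneCechUnit x) • f x :=
  rfl

end BoundedContinuousFunction

section Realcompact

lemma Realcompact.completelyRegularSpace {X : Type} [TopologicalSpace X] (hX : Realcompact X) :
    CompletelyRegularSpace X :=
  let ⟨_, _, he⟩ := hX
  he.isInducing.completelyRegularSpace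

lemma exists_continuousMap_onePoint_eq_zero_iff (E : Type*) [SeminormedAddCommGroup E]
    [ProperSpace E] : ∃ ρ : C(OnePoint E, ℝ), ∀ q, ρ q = 0 ↔ q = OnePoint.infty := by
  have one_add_norm_ne_zero (t : E) : 1 + ‖t‖ ≠ 0 := by positivity
  have htendsto : Tendsto (fun t : E => (1 + ‖t‖)⁻¹) (coclosedCompact E) (𝓝 0) := by
    rw [coclosedCompact_eq_cocompact]
    exact (tendsto_atTop_add_const_left _ 1 tendsto_norm_cocompact_atTop).inv_tendsto_atTop
  refine ⟨OnePoint.continuousMapMk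
    ⟨_, (by fun_prop : Continuous _).inv₀ one_add_norm_ne_zero⟩ 0 htendsto, fun q => ?_⟩
  induction q with
  | infty => exact iff_of_true rfl rfl
  | coe t => exact iff_of_false (inv_ne_zero (one_add_norm_ne_zero t)) (OnePoint.coe_ne_infty t)

lemma Realcompact.exists_eq_zero_of_notMem_range {X : Type} [TopologicalSpace X]
    (hX : Realcompact X) {p : StoneCech X} (hp : p ∉ Set.range stoneCechUnit) :
    ∃ φ : StoneCech X →ᵇ ℝ, φ p = 0 ∧ ∀ x, φ (stoneCechUnit x) ≠ 0 := by
  obtain ⟨ι, e, he⟩ := hX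
  have coord_continuous (i : ι) : Continuous fun x => (e x i : OnePoint ℝ) :=
    OnePoint.continuous_coe.comp ((continuous_apply i).comp he.continuous)
  by_cases hfin : ∀ i, stoneCechExtend (coord_continuous i) p ≠ OnePoint.infty
  · choose c hc using fun i => OnePoint.ne_infty_iff_exists.1 (hfin i)
    have : (comap stoneCechUnit (𝓝 p)).NeBot := comap_neBot_iff_frequently.2 <|
      mem_closure_iff_frequently.1 (denseRange_stoneCechUnit p)
    have he_tendsto : Tendsto e (comap stoneCechUnit (𝓝 p)) (𝓝 c) := by
      refine tendsto_pi_nhds.2 fun i => ?_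
      rw [OnePoint.isOpenEmbedding_coe.isInducing.tendsto_nhds_iff, hc i]
      simpa only [Function.comp_def, stoneCechExtend_stoneCechUnit] using
        ((continuous_stoneCechExtend (coord_continuous i)).tendsto p).comp
          (tendsto_comap (f := stoneCechUnit))
    obtain ⟨x, rfl⟩ := he.isClosed_range.mem_of_tendsto he_tendsto
      (Eventually.of_forall Set.mem_range_self)
    have hx : Tendsto id (comap stoneCechUnit (𝓝 p)) (𝓝 x) :=
      he.isInducing.tendsto_nhds_iff.2 he_tendsto
    exact absurd ⟨x, tendsto_nhds_unique ((continuous_stoneCechUnit.tendsto x).comp hx)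
      tendsto_comap⟩ hp
  · push Not at hfin
    obtain ⟨i, hi⟩ := hfin
    obtain ⟨ρ, hρ⟩ := exists_continuousMap_onePoint_eq_zero_iff ℝ
    refine ⟨mkOfCompact (ρ.comp ⟨_, continuous_stoneCechExtend (coord_continuous i)⟩), ?_,
      fun x => ?_⟩
    · exact (hρ _).2 hi
    · simp [stoneCechExtend_stoneCechUnit, hρ]

end Realcompact

section SupportPoint

/-- A point `p` of the Stone–Čech compactification of `X` is a support point of `T` at `y` if
`T f y` depends only on the germ of `f` at `p`; for additive `T` it suffices to say this for the
germ of `0`. -/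
def IsSupportPoint {X Y E F : Type*} [TopologicalSpace X] [TopologicalSpace Y]
    [NormedAddCommGroup E] [NormedAddCommGroup F] (T : (X →ᵇ E) → (Y →ᵇ F)) (y : Y)
    (p : StoneCech X) : Prop :=
  ∀ f : X →ᵇ E, (∀ᶠ x in comap stoneCechUnit (𝓝 p), f x = 0) → T f y = 0

lemma exists_isSupportPoint {X Y E F : Type} [TopologicalSpace X] [TopologicalSpace Y]
    [NormedAddCommGroup E] [NormedSpace ℝ E] [NormedAddCommGroup F]
    {T : (X →ᵇ E) →+ (Y →ᵇ F)} (hT : SeparatingB T) {y : Y} (hy : ∃ f, T f y ≠ 0) :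
    ∃ p, IsSupportPoint T y p := by
  simp only [IsSupportPoint, eventually_comap]
  by_contra! hcon
  choose f hf hTf using hcon
  obtain ⟨t, ht⟩ := CompactSpace.elim_nhds_subcover
    (fun p => interior {q | ∀ x, stoneCechUnit x = q → f p x = 0})
    fun p => interior_mem_nhds.2 (hf p)
  obtain ⟨ρ, hρ⟩ := PartitionOfUnity.exists_isSubordinate isClosed_univ
    (fun p : t => interior {q | ∀ x, stoneCechUnit x = q → f p x = 0})
    (fun _ => isOpen_interior) (by simpa [Set.iUnion_subtype] using ht.ge)
  obtain ⟨g, hg⟩ := hy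
  have g_eq_sum : g = ∑ p : t, stoneCechRestrict (mkOfCompact (ρ p)) • g := by
    ext x
    have hsum : ∑ p : t, ρ p (stoneCechUnit x) = 1 := by
      rw [← finsum_eq_sum_of_fintype]
      exact ρ.sum_eq_one (Set.mem_univ _)
    simp only [BoundedContinuousFunction.sum_apply, stoneCechRestrict_smul_apply,
      mkOfCompact_apply, ← Finset.sum_smul, hsum, one_smul]
  refine hg ?_
  rw [g_eq_sum, map_sum, BoundedContinuousFunction.sum_apply]
  refine Finset.sum_eq_zero fun p _ => ?_
  have hdisjoint (x : X) : ‖(stoneCechRestrict (mkOfCompact (ρ p)) • g) x‖ * ‖f p x‖ = 0 := by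
    by_cases hx : ρ p (stoneCechUnit x) = 0
    · rw [stoneCechRestrict_smul_apply, mkOfCompact_apply, hx, zero_smul, norm_zero, zero_mul]
    · have : f p x = 0 := interior_subset (hρ p (subset_tsupport _ hx)) x rfl
      rw [this, norm_zero, mul_zero]
  exact norm_eq_zero.1 ((mul_eq_zero.1 (hT _ _ hdisjoint y)).resolve_right
    (norm_ne_zero_iff.2 (hTf p)))

variable {X Y E F : Type*} [TopologicalSpace X] [TopologicalSpace Y]
  [NormedAddCommGroup E] [NormedSpace ℝ E] [NormedAddCommGroup F] [NormedSpace ℝ F]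
  {T : (X →ᵇ E) →L[ℝ] (Y →ᵇ F)} {y : Y} {p : StoneCech X} {x : X} {h : Y → StoneCech X}

lemma IsSupportPoint.map_apply_congr (hp : IsSupportPoint T y p) {f g : X →ᵇ E}
    (hfg : Tendsto (f - g) (comap stoneCechUnit (𝓝 p)) (𝓝 0)) : T f y = T g y := by
  have hker : closure {g | ∀ᶠ x in comap stoneCechUnit (𝓝 p), g x = 0} ⊆ {f | T f y = 0} :=
    closure_minimal hp (isClosed_eq ((continuous_eval_const y).comp T.continuous)
      continuous_const)
  have := hker (mem_closure_setOf_eventually_eq_zero hfg)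
  rwa [Set.mem_ofPred_eq, map_sub, BoundedContinuousFunction.sub_apply, sub_eq_zero] at this

lemma IsSupportPoint.map_apply_eq_of_continuousAt (hp : IsSupportPoint T y p)
    {Φ : StoneCech X → X →ᵇ E} (hΦ : ContinuousAt Φ p) {f : X →ᵇ E}
    (hf : ∀ x, f x = Φ (stoneCechUnit x) x) :
    T f y = T (Φ p) y := by
  refine hp.map_apply_congr (squeeze_zero_norm (fun x => ?_)
    ((tendsto_iff_norm_sub_tendsto_zero.1 hΦ.tendsto).comp tendsto_comap))
  rw [BoundedContinuousFunction.sub_apply, hf]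
  exact norm_coe_le_norm (Φ (stoneCechUnit x) - Φ p) x

lemma IsSupportPoint.map_stoneCechRestrict_smul (hp : IsSupportPoint T y p) (φ : StoneCech X →ᵇ ℝ)
    (f : X →ᵇ E) : T (stoneCechRestrict φ • f) y = φ p • T f y := by
  rw [hp.map_apply_eq_of_continuousAt (Φ := fun q => φ q • f) (by fun_prop) fun _ => rfl,
    map_smul, BoundedContinuousFunction.smul_apply]

lemma IsSupportPoint.map_const_apply [CompletelyRegularSpace X]
    (hx : IsSupportPoint T y (stoneCechUnit x)) (f : X →ᵇ E) : T (const X (f x)) y = T f y := by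
  refine hx.map_apply_congr ?_
  rw [← isInducing_stoneCechUnit.nhds_eq_comap]
  simpa using (const X (f x) - f).continuous.tendsto x

lemma continuous_of_isSupportPoint (hh : ∀ y, IsSupportPoint T y (h y))
    (hT : ∀ y, ∃ f, T f y ≠ 0) : Continuous h := by
  refine continuous_iff_continuousAt.2 fun y => tendsto_def.2 fun U hU => ?_
  obtain ⟨χ, hχ, hχU⟩ := exists_boundedContinuous_one_zero hU
  obtain ⟨f, hf⟩ := hT y
  have hne : T (stoneCechRestrict χ • f) y ≠ 0 := by
    rwa [(hh y).map_stoneCechRestrict_smul, hχ, one_smul]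
  filter_upwards [(T (stoneCechRestrict χ • f)).continuous.continuousAt.eventually_ne hne] with z hz
  rw [(hh z).map_stoneCechRestrict_smul] at hz
  by_contra hzU
  rw [hχU _ hzU, zero_smul] at hz
  exact hz rfl

lemma apply_eq_zero_of_isSupportPoint (hh : ∀ y, IsSupportPoint T y (h y))
    (hinj : Function.Injective T) {k : X →ᵇ E}
    (hk : ∀ᶠ q in 𝓝 (stoneCechUnit x), ∀ z, h z = q → T k z = 0) : k x = 0 := by
  obtain ⟨θ, hθ, hθ'⟩ := exists_boundedContinuous_one_zero hk
  have hzero : stoneCechRestrict θ • k = 0 := hinj <| by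
    ext z
    rw [(hh z).map_stoneCechRestrict_smul, map_zero, coe_zero, Pi.zero_apply]
    by_cases hz : T k z = 0
    · rw [hz, smul_zero]
    · rw [hθ' _ fun H => hz (H z rfl), zero_smul]
  simpa only [stoneCechRestrict_smul_apply, hθ, one_smul, coe_zero, Pi.zero_apply] using
    DFunLike.congr_fun hzero x

end SupportPoint

lemma exists_apply_ne_zero_of_surjective {α Y F : Type*} [TopologicalSpace Y]
    [NormedAddCommGroup F] [Nontrivial F] {T : α → Y →ᵇ F} (hT : Function.Surjective T) (y : Y) :
    ∃ f, T f y ≠ 0 := by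
  obtain ⟨v, hv⟩ := exists_ne (0 : F)
  obtain ⟨f, hf⟩ := hT (const Y v)
  exact ⟨f, by simpa [hf] using hv⟩

lemma eventually_half_le_norm_sub {F : Type*} [SeminormedAddCommGroup F] {v : ℕ → F}
    (hv : Pairwise fun m n => 1 ≤ ‖v m - v n‖) (w : F) : ∀ᶠ m in atTop, 1 / 2 ≤ ‖v m - w‖ := by
  by_contra h
  obtain ⟨m, hm⟩ := (not_eventually.1 h).exists
  refine h ?_
  filter_upwards [eventually_gt_atTop m] with n hn
  linarith [hv hn.ne', norm_sub_le_norm_sub_add_norm_sub (v n) w (v m), norm_sub_rev w (v m)]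

section SupportMap

variable {X Y E F : Type*} [TopologicalSpace X] [TopologicalSpace Y]
  [NormedAddCommGroup E] [NormedSpace ℝ E] [NormedAddCommGroup F] [NormedSpace ℝ F]
  {T : (X →ᵇ E) →L[ℝ] (Y →ᵇ F)} {S : (Y →ᵇ F) →ₗ[ℝ] (X →ᵇ E)} {h : Y → StoneCech X}
  {φ : StoneCech X →ᵇ ℝ}

lemma frequently_ne_zero_of_isSupportPoint [CompletelyRegularSpace Y] [Nontrivial F]
    (hh : ∀ y, IsSupportPoint T y (h y)) (hT : Function.Bijective T)
    (hφ : ∀ x, φ (stoneCechUnit x) ≠ 0) (y : Y) : ∃ᶠ z in 𝓝 y, φ (h z) ≠ 0 := by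
  intro hev
  obtain ⟨v, hv⟩ := exists_ne (0 : F)
  obtain ⟨β, hβ, hβ'⟩ := exists_boundedContinuous_one_zero hev
  obtain ⟨f, hf⟩ := hT.surjective (β • const Y v)
  have hTf (z : Y) : T f z = β z • v := by rw [hf]; rfl
  have hmul : stoneCechRestrict φ • f = 0 := hT.injective <| by
    ext z
    rw [(hh z).map_stoneCechRestrict_smul, hTf, map_zero, coe_zero, Pi.zero_apply]
    by_cases hz : φ (h z) = 0
    · rw [hz, zero_smul]
    · rw [hβ' z (not_not.2 hz), zero_smul, smul_zero]
  have hf_zero : f = 0 := by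
    ext x
    exact (smul_eq_zero.1 (DFunLike.congr_fun hmul x)).resolve_left (hφ x)
  exact hv (by simpa [hf_zero, hβ] using (hTf y).symm)

lemma apply_eq_staircase (hh : ∀ y, IsSupportPoint T y (h y)) (hinj : Function.Injective T)
    (hTS : Function.RightInverse S T) {u : ℕ → F} {g : Y →ᵇ F}
    (hg : ∀ z, g z = staircase u (φ (h z))) {x : X}
    (hx : Real.sin (Real.log (φ (stoneCechUnit x))) ≠ 0) :
    S g x = staircase (fun m => S (const Y (u m))) (φ (stoneCechUnit x)) x := by
  set m := layer (φ (stoneCechUnit x)) with hm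
  have hstep : Continuous (staircase (V := ℝ) (Pi.single m 1)) :=
    continuous_staircase <| tendsto_const_nhds.congr' <| by
      filter_upwards [eventually_gt_atTop m] with n hn
      simp [hn.ne']
  -- `ρ` isolates the `m`-th layer: `g` agrees with `(ρ ∘ h) • u m` wherever `h` is close to `x`.
  let ρ : StoneCech X →ᵇ ℝ := mkOfCompact ⟨_, hstep.comp φ.continuous⟩
  have hk : (S g - stoneCechRestrict ρ • S (const Y (u m))) x = 0 := by
    refine apply_eq_zero_of_isSupportPoint hh hinj ?_
    filter_upwards [φ.continuous.continuousAt.eventually (eventually_layer_eq hx)]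
      with _ hlayer z rfl
    rw [map_sub, BoundedContinuousFunction.sub_apply, (hh z).map_stoneCechRestrict_smul, hTS, hTS,
      hg, sub_eq_zero]
    simp [ρ, staircase, hlayer, ← hm]
  rw [BoundedContinuousFunction.sub_apply, sub_eq_zero] at hk
  rw [hk]
  simp [ρ, staircase, ← hm, stoneCechRestrict_smul_apply]

lemma bddAbove_range_norm_staircase_apply [Nontrivial F]
    (hh : ∀ y, IsSupportPoint T y (h y)) (hinj : Function.Injective T)
    (hTS : Function.RightInverse S T) (φ : StoneCech X →ᵇ ℝ) {v : ℕ → F}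
    (hv : IsBoundedUnder (· ≤ ·) atTop fun m => ‖v m‖) :
    BddAbove (Set.range fun x : X =>
      ‖staircase (fun m => S (const Y (v m))) (φ (stoneCechUnit x)) x‖) := by
  have hφh : Continuous fun z => φ (h z) := φ.continuous.comp <|
    continuous_of_isSupportPoint hh (exists_apply_ne_zero_of_surjective hTS.surjective)
  refine bddAbove_range_of_forall_tendsto_zero_mul (ℓ := fun x => layer (φ (stoneCechUnit x)))
    (fun m => ?_) fun a ha => ?_
  · obtain ⟨B, hB⟩ := ((Set.finite_Iic m).image fun i => ‖S (const Y (v i))‖).bddAbove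
    refine ⟨B, Set.forall_mem_image.2 fun x hx => ?_⟩
    exact (norm_coe_le_norm _ x).trans <| (norm_staircase_le _ _).trans <|
      hB (Set.mem_image_of_mem _ hx)
  · have hav : Tendsto (fun m => a m • v m) atTop (𝓝 0) := ha.zero_smul_isBoundedUnder_le hv
    obtain ⟨C, hC⟩ := hav.norm.bddAbove_range
    let g : Y →ᵇ F := .ofNormedAddCommGroup (fun z => staircase (fun m => a m • v m) (φ (h z)))
      ((continuous_staircase hav).comp hφh) C
      fun z => (norm_staircase_le _ _).trans (hC ⟨_, rfl⟩)
    refine ⟨‖S g‖, Set.forall_mem_range.2 fun x => ?_⟩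
    by_cases hx : Real.sin (Real.log (φ (stoneCechUnit x))) = 0
    · simp [staircase_of_sin_log_eq_zero _ hx]
    have hconst : (fun m => S (const Y (a m • v m))) = fun m => a m • S (const Y (v m)) :=
      funext fun m => map_smul S (a m) (const Y (v m))
    refine le_trans ?_ ((S g).norm_coe_le_norm x)
    rw [apply_eq_staircase hh hinj hTS (g := g) (u := fun m => a m • v m) (φ := φ)
      (fun _ => rfl) hx, hconst, staircase_smul, BoundedContinuousFunction.smul_apply, norm_smul]
    gcongr
    exact le_abs_self _

lemma exists_map_eq_staircase [Nontrivial F]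
    (hh : ∀ y, IsSupportPoint T y (h y)) (hinj : Function.Injective T)
    (hTS : Function.RightInverse S T) (hφ : ∀ x, φ (stoneCechUnit x) ≠ 0) {v : ℕ → F}
    (hv : IsBoundedUnder (· ≤ ·) atTop fun m => ‖v m‖) :
    ∃ f : X →ᵇ E, ∀ z, φ (h z) ≠ 0 → T f z = staircase v (φ (h z)) := by
  set V : ℕ → X →ᵇ E := fun m => S (const Y (v m)) with hV
  obtain ⟨C, hC⟩ := bddAbove_range_norm_staircase_apply hh hinj hTS φ hv
  have hΦ {q : StoneCech X} (hq : φ q ≠ 0) : ContinuousAt (fun q => staircase V (φ q)) q :=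
    (continuousAt_staircase V hq).comp φ.continuous.continuousAt
  have hΦX : Continuous fun x => staircase V (φ (stoneCechUnit x)) :=
    continuous_iff_continuousAt.2 fun x =>
      (hΦ (hφ x)).comp continuous_stoneCechUnit.continuousAt
  refine ⟨.ofNormedAddCommGroup (fun x => staircase V (φ (stoneCechUnit x)) x)
    (hΦX.eval continuous_id) C fun x => hC ⟨x, rfl⟩, fun z hz => ?_⟩
  rw [(hh z).map_apply_eq_of_continuousAt (hΦ hz) fun _ => rfl]
  have map_eq : T (staircase V (φ (h z))) = staircase (fun m => const Y (v m)) (φ (h z)) := by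
    simpa only [ContinuousLinearMap.coe_coe, hV, hTS _] using
      map_staircase (T : (X →ᵇ E) →ₗ[ℝ] (Y →ᵇ F)) V (φ (h z))
  rw [map_eq]
  rfl

end SupportMap

lemma mem_range_stoneCechUnit_of_isSupportPoint {X : Type} {Y E F : Type*} [TopologicalSpace X]
    [TopologicalSpace Y] [CompletelyRegularSpace Y]
    [NormedAddCommGroup E] [NormedSpace ℝ E] [NormedAddCommGroup F] [NormedSpace ℝ F]
    (hX : Realcompact X) (hF : ¬ FiniteDimensional ℝ F) {T : (X →ᵇ E) →L[ℝ] (Y →ᵇ F)}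
    (hT : Function.Bijective T) {h : Y → StoneCech X}
    (hh : ∀ y, IsSupportPoint T y (h y)) (y : Y) : h y ∈ Set.range stoneCechUnit := by
  by_contra hy
  have : Nontrivial F := not_subsingleton_iff_nontrivial.1 fun _ => hF inferInstance
  obtain ⟨φ₀, hφ₀y, hφ₀X⟩ := hX.exists_eq_zero_of_notMem_range hy
  obtain ⟨c, hc, hfreq⟩ :=
    exists_frequently_mul_mem_plateau (frequently_ne_zero_of_isSupportPoint hh hT hφ₀X y)
  obtain ⟨R, v, -, hvR, hv⟩ := exists_seq_norm_le_one_le_norm_sub hF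
  let L := LinearEquiv.ofBijective (T : (X →ᵇ E) →ₗ[ℝ] (Y →ᵇ F)) hT
  have hTS : Function.RightInverse (L.symm : (Y →ᵇ F) →ₗ[ℝ] (X →ᵇ E)) T := L.apply_symm_apply
  obtain ⟨f, hf⟩ := exists_map_eq_staircase (φ := c • φ₀) hh hT.injective
    hTS (fun x => mul_ne_zero hc.ne' (hφ₀X x)) (isBoundedUnder_of ⟨R, hvR⟩)
  have hφ_tendsto : Tendsto (fun z => c * φ₀ (h z)) (𝓝 y) (𝓝 0) := by
    have hcont : Continuous fun z => c * φ₀ (h z) := continuous_const.mul <| φ₀.continuous.comp <|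
      continuous_of_isSupportPoint hh (exists_apply_ne_zero_of_surjective hT.surjective)
    simpa [hφ₀y] using hcont.tendsto y
  have hfar : ∀ᶠ z in 𝓝 y, c * φ₀ (h z) ≠ 0 → 1 / 2 ≤ ‖v (layer (c * φ₀ (h z))) - T f y‖ :=
    hφ_tendsto.eventually <| eventually_nhdsWithin_iff.1 <|
      tendsto_layer_nhdsNE_zero.eventually (eventually_half_le_norm_sub hv (T f y))
  have hnear : ∀ᶠ z in 𝓝 y, ‖T f z - T f y‖ < 1 / 2 := by
    simpa only [dist_eq_norm] using
      Metric.tendsto_nhds.1 ((T f).continuous.tendsto y) _ one_half_pos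
  obtain ⟨z, hz, hz_far, hz_near⟩ := (hfreq.and_eventually (hfar.and hnear)).exists
  have hz_ne := ne_zero_of_sin_log_ne_zero (sin_log_ne_zero_of_mem_plateau hz)
  rw [hf z hz_ne] at hz_near
  change ‖staircase v (c * φ₀ (h z)) - _‖ < _ at hz_near
  rw [staircase_of_mem_plateau v hz] at hz_near
  exact (hz_far hz_ne).not_gt hz_near

lemma norm_staircase_sqrt_smul_le {F : Type*} [NormedAddCommGroup F] [NormedSpace ℝ F] (w : F) :
    ‖staircase (fun m => √m) ‖w‖ • w‖ ≤ √‖w‖ := by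
  rcases eq_or_ne w 0 with rfl | hw
  · simp
  calc ‖staircase (fun m => √m) ‖w‖ • w‖
      ≤ √(layer ‖w‖) * ‖w‖ := by
        rw [norm_smul]
        gcongr
        exact (norm_staircase_le _ _).trans_eq (Real.norm_of_nonneg (Real.sqrt_nonneg _))
    _ ≤ √(‖w‖⁻¹) * ‖w‖ := by
        gcongr
        simpa only [abs_norm] using layer_le_inv_abs ‖w‖
    _ = √‖w‖ := by
        rw [Real.sqrt_inv, inv_mul_eq_div, Real.div_sqrt]

lemma exists_eq_staircase_sqrt_smul {Y F : Type*} [TopologicalSpace Y] [NormedAddCommGroup F]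
    [NormedSpace ℝ F] (g : Y →ᵇ F) :
    ∃ G : Y →ᵇ F, ∀ z, G z = staircase (fun m => √m) ‖g z‖ • g z := by
  refine ⟨.ofNormedAddCommGroup (fun z => staircase (fun m => √m) ‖g z‖ • g z)
    (continuous_iff_continuousAt.2 fun z => ?_) (√‖g‖) fun z =>
      (norm_staircase_sqrt_smul_le _).trans (Real.sqrt_le_sqrt (g.norm_coe_le_norm z)),
    fun _ => rfl⟩
  have hg := g.continuous.continuousAt (x := z)
  by_cases hz : g z = 0
  · have hsqrt : Tendsto (fun z => √‖g z‖) (𝓝 z) (𝓝 0) := by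
      simpa [hz] using hg.norm.sqrt.tendsto
    rw [ContinuousAt, hz, smul_zero]
    exact squeeze_zero_norm (fun z => norm_staircase_sqrt_smul_le _) hsqrt
  · exact ((continuousAt_staircase _ (norm_ne_zero_iff.2 hz)).tendsto.comp hg.norm).smul hg

section FiberMap

lemma norm_map_const_apply_le {𝕜 X Y E F : Type*} [NontriviallyNormedField 𝕜]
    [TopologicalSpace X] [TopologicalSpace Y] [NormedAddCommGroup E] [NormedSpace 𝕜 E]
    [NormedAddCommGroup F] [NormedSpace 𝕜 F] (T : (X →ᵇ E) →L[𝕜] (Y →ᵇ F)) (y : Y) (e : E) :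
    ‖T (const X e) y‖ ≤ ‖T‖ * ‖e‖ :=
  calc ‖T (const X e) y‖ ≤ ‖T (const X e)‖ := norm_coe_le_norm _ y
    _ ≤ ‖T‖ * ‖const X e‖ := T.le_opNorm _
    _ ≤ ‖T‖ * ‖e‖ := by
      gcongr
      exact norm_const_le e

/-- The map `J_y : E → F`, `J_y e = (T ê)(y)`, as a continuous linear map. -/
noncomputable def fiberMap {𝕜 X Y E F : Type*} [NontriviallyNormedField 𝕜]
    [TopologicalSpace X] [TopologicalSpace Y] [NormedAddCommGroup E] [NormedSpace 𝕜 E]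
    [NormedAddCommGroup F] [NormedSpace 𝕜 F] (T : (X →ᵇ E) →L[𝕜] (Y →ᵇ F)) (y : Y) : E →L[𝕜] F :=
  LinearMap.mkContinuous
    { toFun e := T (const X e) y
      map_add' a b := congrArg (· y) (T.map_add (const X a) (const X b))
      map_smul' c e := congrArg (· y) (T.map_smul c (const X e)) }
    ‖T‖ (norm_map_const_apply_le T y)

variable {X Y E F : Type} [TopologicalSpace X] [TopologicalSpace Y] [CompletelyRegularSpace Y]
  [NormedAddCommGroup E] [NormedSpace ℝ E] [NormedAddCommGroup F] [NormedSpace ℝ F]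
  {T : (X →ᵇ E) →L[ℝ] (Y →ᵇ F)} {S : (Y →ᵇ F) → X →ᵇ E}

lemma apply_eq_zero_of_eventually_map_eq_zero [CompletelyRegularSpace X] [Nontrivial F]
    (hTS : Function.RightInverse S T) (hST : Function.LeftInverse S T) (hS : SeparatingB S)
    {y : Y} {x : X} (hx : IsSupportPoint T y (stoneCechUnit x)) {k : X →ᵇ E}
    (hk : ∀ᶠ z in 𝓝 y, T k z = 0) : k x = 0 := by
  obtain ⟨v, hv⟩ := exists_ne (0 : F)
  obtain ⟨β, hβ, hβ'⟩ := exists_boundedContinuous_one_zero hk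
  have smul_apply (z : Y) : (β • const Y v) z = β z • v := rfl
  have hmul := hS (T k) (β • const Y v) (fun z => by
    by_cases hz : T k z = 0
    · rw [hz, norm_zero, zero_mul]
    · rw [smul_apply, hβ' z hz, zero_smul, norm_zero, mul_zero]) x
  rw [hST, mul_eq_zero, norm_eq_zero, norm_eq_zero] at hmul
  refine hmul.resolve_right fun hzero => hv ?_
  calc v = T (S (β • const Y v)) y := by rw [hTS, smul_apply, hβ, one_smul]
    _ = fiberMap T y (S (β • const Y v) x) := (hx.map_const_apply _).symm
    _ = 0 := by rw [hzero, map_zero]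

variable {h : Y → X}

lemma fiberMap_ne_zero_of_frequently_mem_plateau [CompletelyRegularSpace X] [Nontrivial F]
    (hTS : Function.RightInverse S T) (hST : Function.LeftInverse S T) (hS : SeparatingB S)
    (hh : ∀ z, IsSupportPoint T z (stoneCechUnit (h z))) {y : Y} {e : E}
    (hfreq : ∃ᶠ z in 𝓝 y, ‖fiberMap T z e‖ ∈ plateau) : fiberMap T y e ≠ 0 := by
  intro (hy : T (const X e) y = 0)
  set g := T (const X e) with hg
  replace hfreq : ∃ᶠ z in 𝓝 y, ‖g z‖ ∈ plateau := hfreq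
  obtain ⟨G, hG⟩ := exists_eq_staircase_sqrt_smul g
  have apply_SG {z : Y} (hz : ‖g z‖ ∈ plateau) : S G (h z) = √(layer ‖g z‖) • e := by
    have hk : (S G - √(layer ‖g z‖) • const X e) (h z) = 0 := by
      refine apply_eq_zero_of_eventually_map_eq_zero hTS hST hS (hh z) ?_
      filter_upwards [g.continuous.norm.continuousAt.eventually
        (eventually_staircase_eq (fun m => √m) hz)] with w hw
      rw [map_sub, map_smul, hTS, BoundedContinuousFunction.sub_apply,
        BoundedContinuousFunction.smul_apply, hG, hw, ← hg, sub_self]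
    exact sub_eq_zero.1 hk
  have he : 0 < ‖e‖ := norm_pos_iff.2 <| by
    rintro rfl
    obtain ⟨z, hz⟩ := hfreq.exists
    exact ne_zero_of_sin_log_ne_zero (sin_log_ne_zero_of_mem_plateau hz)
      (norm_eq_zero.2 (map_zero (fiberMap T z)))
  have hlarge : ∀ᶠ t in 𝓝[≠] 0, ‖S G‖ < √(layer t) * ‖e‖ :=
    (((Real.tendsto_sqrt_atTop.comp tendsto_natCast_atTop_atTop).comp
      tendsto_layer_nhdsNE_zero).atTop_mul_const he).eventually_gt_atTop _
  have hnorm : Tendsto (fun z => ‖g z‖) (𝓝 y) (𝓝 0) := by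
    simpa [hy] using g.continuous.norm.tendsto y
  obtain ⟨z, hz, hz_large⟩ :=
    (hfreq.and_eventually (hnorm.eventually (eventually_nhdsWithin_iff.1 hlarge))).exists
  refine ((S G).norm_coe_le_norm (h z)).not_gt ?_
  rw [apply_SG hz, norm_smul, Real.norm_of_nonneg (Real.sqrt_nonneg _)]
  exact hz_large (ne_zero_of_sin_log_ne_zero (sin_log_ne_zero_of_mem_plateau hz))

lemma injective_fiberMap [CompletelyRegularSpace X] [Nontrivial F]
    (hTS : Function.RightInverse S T) (hST : Function.LeftInverse S T) (hS : SeparatingB S)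
    (hh : ∀ z, IsSupportPoint T z (stoneCechUnit (h z))) (y : Y) :
    Function.Injective (fiberMap T y) := by
  refine (injective_iff_map_eq_zero _).2 fun e he => ?_
  by_contra hne
  have hfreq : ∃ᶠ z in 𝓝 y, ‖fiberMap T z e‖ ≠ 0 := fun hev => hne <|
    apply_eq_zero_of_eventually_map_eq_zero hTS hST hS (hh y) (k := const X e) <|
      hev.mono fun z hz => norm_eq_zero.1 (not_not.1 hz)
  obtain ⟨c, hc, hfreq⟩ := exists_frequently_mul_mem_plateau hfreq
  refine fiberMap_ne_zero_of_frequently_mem_plateau hTS hST hS hh (e := c • e) (y := y) ?_ ?_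
  · simpa only [map_smul, norm_smul, Real.norm_of_nonneg hc.le] using hfreq
  · rw [map_smul, he, smul_zero]

lemma bijective_fiberMap (hX : Realcompact X) (hF : ¬ FiniteDimensional ℝ F)
    (hbij : Function.Bijective T) (hT : SeparatingB T) (hT' : SeparatingB (Function.invFun T))
    (y : Y) : Function.Bijective (fiberMap T y) := by
  have := hX.completelyRegularSpace
  have : Nontrivial F := not_subsingleton_iff_nontrivial.1 fun _ => hF inferInstance
  have hTS : Function.RightInverse (Function.invFun T) T :=
    Function.rightInverse_invFun hbij.surjective
  have hST : Function.LeftInverse (Function.invFun T) T :=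
    Function.leftInverse_invFun hbij.injective
  choose p hp using fun z =>
    exists_isSupportPoint (T := (T : (X →ᵇ E) →+ (Y →ᵇ F))) hT
      (exists_apply_ne_zero_of_surjective hbij.surjective z)
  choose h hh using mem_range_stoneCechUnit_of_isSupportPoint hX hF hbij hp
  have hsupport (z : Y) : IsSupportPoint T z (stoneCechUnit (h z)) := by
    rw [hh]
    exact hp z
  refine ⟨injective_fiberMap hTS hST hT' hsupport y, fun w => ?_⟩
  obtain ⟨f, hf⟩ := hbij.surjective (const Y w)
  refine ⟨f (h y), ?_⟩
  change T (const X (f (h y))) y = w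
  rw [(hsupport y).map_const_apply, hf, const_apply]

end FiberMap

theorem stmt10_general {𝕂 X Y E F : Type} [RCLike 𝕂]
    [TopologicalSpace X] [TopologicalSpace Y] [CompletelyRegularSpace Y]
    [NormedAddCommGroup E] [NormedSpace 𝕂 E] [NormedAddCommGroup F] [NormedSpace 𝕂 F]
    (hF : ¬ FiniteDimensional 𝕂 F) (hX : Realcompact X)
    (T : (X →ᵇ E) →L[𝕂] (Y →ᵇ F)) (hbij : Function.Bijective ⇑T)
    (hT : SeparatingB ⇑T) (hT' : SeparatingB (Function.invFun ⇑T))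
    (J : Y → E → F)
    (hJ : ∀ (y : Y) (e : E), J y e = T (BoundedContinuousFunction.const X e) y) :
    (∀ y : Y, IsLinearMap 𝕂 (J y)) ∧ (∀ y : Y, Function.Bijective (J y)) ∧
      (∀ (y : Y) (e : E), ‖J y e‖ ≤ ‖T‖ * ‖e‖) ∧
      (∀ e : E, Continuous fun y : Y => J y e) := by
  obtain rfl : J = fun y => ⇑(fiberMap T y) := funext₂ hJ
  refine ⟨fun y => (fiberMap T y).toLinearMap.isLinear, fun y => ?_, norm_map_const_apply_le T,
    fun e => (T (const X e)).continuous⟩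
  let _ := NormedSpace.restrictScalars ℝ 𝕂 E
  let _ := NormedSpace.restrictScalars ℝ 𝕂 F
  have : IsScalarTower ℝ 𝕂 F := .restrictScalars ..
  have hFℝ : ¬ FiniteDimensional ℝ F := fun _ => hF (.of_restrictScalars_finite ℝ 𝕂 F)
  exact bijective_fiberMap hX hFℝ
    (T := (T : (X →ᵇ E) →+ (Y →ᵇ F)).toRealLinearMap T.continuous) hbij hT hT' y

/-- For a continuous linear biseparating map `T`, the maps `J_y : e ↦ (T ê)(y)` are continuous
linear bijections from `E` onto `F` with `‖J_y e‖ ≤ ‖T‖ ‖e‖`, and `y ↦ J_y` is continuous into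
the strong operator topology, i.e. `y ↦ J_y e` is continuous for every `e`. -/
theorem stmt10 {𝕂 X Y E F : Type} [RCLike 𝕂]
    [TopologicalSpace X] [CompletelyRegularSpace X] [T2Space X]
    [TopologicalSpace Y] [CompletelyRegularSpace Y] [T2Space Y]
    [NormedAddCommGroup E] [NormedSpace 𝕂 E]
    [NormedAddCommGroup F] [NormedSpace 𝕂 F]
    (hE : ¬ FiniteDimensional 𝕂 E) (hF : ¬ FiniteDimensional 𝕂 F)
    (hX : Realcompact X) (hY : Realcompact Y)
    (T : (X →ᵇ E) →L[𝕂] (Y →ᵇ F)) (hbij : Function.Bijective ⇑T)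
    (hT : SeparatingB ⇑T) (hT' : SeparatingB (Function.invFun ⇑T))
    (J : Y → E → F)
    (hJ : ∀ (y : Y) (e : E), J y e = T (BoundedContinuousFunction.const X e) y) :
    (∀ y : Y, IsLinearMap 𝕂 (J y)) ∧ (∀ y : Y, Function.Bijective (J y)) ∧
      (∀ (y : Y) (e : E), ‖J y e‖ ≤ ‖T‖ * ‖e‖) ∧
      (∀ e : E, Continuous fun y : Y => J y e) := by
  exact stmt10_general hF hX T hbij hT hT' J hJ
end
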